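/- arXiv:0711.1890 — 3 statements merged into one kernel-verified Lean document; each statement's English description precedes it below -/
import Mathlib

section
/- Let c > 0. (a) If X and Y are independent random variables each exponentially distributed with rate c, then E[X/(2X + Y)] = 1 − ln 2. (b) If X is exponential with rate c and Y is independent with the Gamma distribution of shape 2 and rate c, then E[X/(2X + Y)] = 3 − 4·ln 2. (c) If X and Y are independent, each with the Gamma distribution of shape 2 and rate c, then E[X/(2X + Y)] = 12·ln 2 − 8. -/
open MeasureTheory ProbabilityTheory Real

/-! If `X` and `Y` are independent Gamma variables with the same rate and shapes `a`, `b`, then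
`U = X / (X + Y)` has the Beta distribution with parameters `a`, `b` (and is independent of
`X + Y`). Since `X / (2X + Y) = U / (1 + U)`, the expectation is, for integer shapes, a multiple of
`∫ u in 0..1, u ^ m * (1 - u) ^ n / (1 + u)`. Writing `u = (1 + u) - 1` and
`u ^ m * (1 - u) = u ^ m - u ^ (m + 1)` gives recursions that reduce this integral to
`∫ u in 0..1, 1 / (1 + u) = log 2`. -/

open scoped ENNReal Nat

section ChangeOfVariables

lemma lintegral_eq_abs_mul_lintegral_comp_mul_left {s : ℝ} (hs : s ≠ 0) (f : ℝ → ℝ≥0∞) :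
    ∫⁻ x, f x = ENNReal.ofReal |s| * ∫⁻ u, f (s * u) := by
  conv_lhs => rw [← Real.smul_map_volume_mul_left hs]
  rw [lintegral_smul_measure, smul_eq_mul, (measurableEmbedding_mulLeft₀ hs).lintegral_map]

/-- The substitution `x = s * u`, `y = s * (1 - u)`, whose Jacobian determinant is `-s`. -/
lemma lintegral_prod_eq_lintegral_mul_mul_one_sub {F : ℝ × ℝ → ℝ≥0∞} (hF : Measurable F) :
    ∫⁻ p, F p = ∫⁻ s, ∫⁻ u, ENNReal.ofReal |s| * F (s * u, s * (1 - u)) := by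
  calc ∫⁻ p, F p
      = ∫⁻ x, ∫⁻ y, F (x, y) := lintegral_prod _ hF.aemeasurable
    _ = ∫⁻ x, ∫⁻ s, F (x, s - x) := by
        refine lintegral_congr fun x ↦ ?_
        exact (lintegral_sub_right_eq_self (fun y ↦ F (x, y)) x).symm
    _ = ∫⁻ s, ∫⁻ x, F (x, s - x) :=
        lintegral_lintegral_swap (by unfold Function.uncurry; fun_prop)
    _ = ∫⁻ s, ∫⁻ u, ENNReal.ofReal |s| * F (s * u, s * (1 - u)) := by
        refine lintegral_congr_ae ?_
        filter_upwards [Measure.ae_ne volume (0 : ℝ)] with s hs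
        rw [lintegral_eq_abs_mul_lintegral_comp_mul_left hs, lintegral_const_mul _ (by fun_prop)]
        simp_rw [mul_one_sub]

end ChangeOfVariables

section BetaGamma

variable {a b r : ℝ}

@[fun_prop]
lemma measurable_gammaPDF (a r : ℝ) : Measurable (gammaPDF a r) :=
  (measurable_gammaPDFReal a r).ennreal_ofReal

@[fun_prop]
lemma measurable_betaPDF (a b : ℝ) : Measurable (betaPDF a b) :=
  (measurable_betaPDFReal a b).ennreal_ofReal

lemma betaPDFReal_eq_indicator (a b : ℝ) : betaPDFReal a b =
    (Set.Ioo 0 1).indicator fun u ↦ (beta a b)⁻¹ * (u ^ (a - 1) * (1 - u) ^ (b - 1)) := by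
  ext u
  simp only [betaPDFReal, Set.indicator, Set.mem_Ioo, one_div, mul_assoc]

lemma betaPDFReal_nonneg (ha : 0 < a) (hb : 0 < b) (u : ℝ) : 0 ≤ betaPDFReal a b u := by
  by_cases hu : 0 < u ∧ u < 1
  · exact (betaPDFReal_pos hu.1 hu.2 ha hb).le
  · rw [betaPDFReal, if_neg hu]

lemma gammaPDFReal_mul_gammaPDFReal (ha : 0 < a) (hb : 0 < b) (hr : 0 < r) {s u : ℝ}
    (hs : 0 < s) (hu₀ : 0 < u) (hu₁ : u < 1) :
    s * (gammaPDFReal a r (s * u) * gammaPDFReal b r (s * (1 - u))) =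
      betaPDFReal a b u * gammaPDFReal (a + b) r s := by
  have hv : 0 < 1 - u := sub_pos.2 hu₁
  have := Gamma_pos_of_pos ha
  have := Gamma_pos_of_pos hb
  have := Gamma_pos_of_pos (add_pos ha hb)
  have hexp : exp (-(r * s)) = exp (-(r * (s * u))) * exp (-(r * (s * (1 - u)))) := by
    rw [← exp_add]
    congr 1
    ring
  have hpow : s ^ (a + b - 1) = s * (s ^ (a - 1) * s ^ (b - 1)) := by
    have hexponent : a + b - 1 = 1 + ((a - 1) + (b - 1)) := by ring
    rw [hexponent, rpow_add hs, rpow_one, rpow_add hs]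
  simp only [gammaPDFReal, betaPDFReal, beta, if_pos (mul_pos hs hu₀).le,
    if_pos (mul_pos hs hv).le, if_pos (And.intro hu₀ hu₁), if_pos hs.le]
  rw [hexp, hpow, rpow_add hr, mul_rpow hs.le hu₀.le, mul_rpow hs.le hv.le]
  field_simp

lemma gammaPDF_mul_gammaPDF (ha : 0 < a) (hb : 0 < b) (hr : 0 < r) {s u : ℝ}
    (hs : s ≠ 0) (hu₀ : u ≠ 0) (hu₁ : u ≠ 1) :
    ENNReal.ofReal |s| * (gammaPDF a r (s * u) * gammaPDF b r (s * (1 - u))) =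
      betaPDF a b u * gammaPDF (a + b) r s := by
  rcases hs.lt_or_gt with hs | hs
  · have hzero : gammaPDF a r (s * u) * gammaPDF b r (s * (1 - u)) = 0 := by
      rcases hu₀.lt_or_gt with hu | hu
      · rw [gammaPDF_of_neg (mul_neg_of_neg_of_pos hs (by linarith : 0 < 1 - u)), mul_zero]
      · rw [gammaPDF_of_neg (mul_neg_of_neg_of_pos hs hu), zero_mul]
    rw [hzero, gammaPDF_of_neg hs, mul_zero, mul_zero]
  rcases hu₀.lt_or_gt with hu₀ | hu₀
  · rw [gammaPDF_of_neg (mul_neg_of_pos_of_neg hs hu₀), betaPDF_eq_zero_of_nonpos hu₀.le,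
      zero_mul, mul_zero, zero_mul]
  rcases hu₁.lt_or_gt with hu₁ | hu₁
  · simp only [gammaPDF, betaPDF]
    rw [← ENNReal.ofReal_mul (gammaPDFReal_nonneg ha hr _), ← ENNReal.ofReal_mul (abs_nonneg s),
      ← ENNReal.ofReal_mul (betaPDFReal_nonneg ha hb u), abs_of_pos hs,
      gammaPDFReal_mul_gammaPDFReal ha hb hr hs hu₀ hu₁]
  · rw [gammaPDF_of_neg (mul_neg_of_pos_of_neg hs (sub_neg.2 hu₁)),
      betaPDF_eq_zero_of_one_le hu₁.le, mul_zero, mul_zero, zero_mul]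

lemma ae_ne_gammaMeasure (a r x : ℝ) : ∀ᵐ y ∂gammaMeasure a r, y ≠ x :=
  (withDensity_absolutelyContinuous _ _).ae_le (Measure.ae_ne volume x)

theorem measurePreserving_div_add_add (ha : 0 < a) (hb : 0 < b) (hr : 0 < r) :
    MeasurePreserving (fun p : ℝ × ℝ ↦ (p.1 / (p.1 + p.2), p.1 + p.2))
      ((gammaMeasure a r).prod (gammaMeasure b r))
      ((betaMeasure a b).prod (gammaMeasure (a + b) r)) := by
  refine ⟨by fun_prop, Measure.ext_of_lintegral _ fun f hf ↦ ?_⟩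
  simp only [gammaMeasure, betaMeasure]
  rw [lintegral_map hf (by fun_prop), prod_withDensity (by fun_prop) (by fun_prop),
    prod_withDensity (by fun_prop) (by fun_prop),
    lintegral_withDensity_eq_lintegral_mul _ (by fun_prop) (by fun_prop),
    lintegral_withDensity_eq_lintegral_mul _ (by fun_prop) (by fun_prop),
    ← Measure.volume_eq_prod, lintegral_prod_eq_lintegral_mul_mul_one_sub (by fun_prop),
    Measure.volume_eq_prod, lintegral_prod_symm' _ (by fun_prop)]
  refine lintegral_congr_ae ?_
  filter_upwards [Measure.ae_ne volume (0 : ℝ)] with s hs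
  refine lintegral_congr_ae ?_
  filter_upwards [Measure.ae_ne volume (0 : ℝ), Measure.ae_ne volume (1 : ℝ)] with u hu₀ hu₁
  have hsum : s * u + s * (1 - u) = s := by ring
  simp only [Pi.mul_apply, hsum, mul_div_cancel_left₀ u hs]
  rw [← mul_assoc, gammaPDF_mul_gammaPDF ha hb hr hs hu₀ hu₁]

end BetaGamma

section RandomVariables

variable {Ω : Type*} [MeasurableSpace Ω] {μ : Measure Ω} {X Y : Ω → ℝ} {a b r : ℝ}

theorem hasLaw_div_add_add (ha : 0 < a) (hb : 0 < b) (hr : 0 < r)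
    (hX : HasLaw X (gammaMeasure a r) μ) (hY : HasLaw Y (gammaMeasure b r) μ)
    (hXY : IndepFun X Y μ) :
    HasLaw (fun ω ↦ (X ω / (X ω + Y ω), X ω + Y ω))
      ((betaMeasure a b).prod (gammaMeasure (a + b) r)) μ := by
  have := isProbabilityMeasure_gammaMeasure ha hr
  have := hX.isProbabilityMeasure
  exact (measurePreserving_div_add_add ha hb hr).fun_comp_hasLaw
    ((indepFun_iff_hasLaw_prodMk_prod hX hY).1 hXY)

theorem integral_div_two_mul_add (ha : 0 < a) (hb : 0 < b) (hr : 0 < r)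
    (hX : HasLaw X (gammaMeasure a r) μ) (hY : HasLaw Y (gammaMeasure b r) μ)
    (hXY : IndepFun X Y μ) :
    ∫ ω, X ω / (2 * X ω + Y ω) ∂μ = ∫ u, u / (1 + u) ∂betaMeasure a b := by
  have := isProbabilityMeasureBeta ha hb
  have := isProbabilityMeasure_gammaMeasure (add_pos ha hb) hr
  have hlaw := hasLaw_div_add_add ha hb hr hX hY hXY
  have hsum : HasLaw (fun ω ↦ X ω + Y ω) (gammaMeasure (a + b) r) μ :=
    measurePreserving_snd.fun_comp_hasLaw hlaw
  have hfrac : HasLaw (fun ω ↦ X ω / (X ω + Y ω)) (betaMeasure a b) μ :=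
    measurePreserving_fst.fun_comp_hasLaw hlaw
  have hne : ∀ᵐ ω ∂μ, X ω + Y ω ≠ 0 :=
    (hsum.ae_iff (by fun_prop)).2 (ae_ne_gammaMeasure (a + b) r 0)
  have hmeas : Measurable fun u : ℝ ↦ u / (1 + u) := by fun_prop
  rw [← hfrac.integral_comp hmeas.aestronglyMeasurable]
  refine integral_congr_ae ?_
  filter_upwards [hne] with ω hω
  simp only [Function.comp_apply]
  rw [one_add_div hω, div_div_div_cancel_right₀ hω]
  congr 1
  ring

end RandomVariables

section BetaExpectation

lemma integral_betaMeasure {E : Type*} [NormedAddCommGroup E] [NormedSpace ℝ E] {a b : ℝ}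
    (ha : 0 < a) (hb : 0 < b) (f : ℝ → E) :
    ∫ u, f u ∂betaMeasure a b =
      (beta a b)⁻¹ • ∫ u in 0..1, (u ^ (a - 1) * (1 - u) ^ (b - 1)) • f u := by
  rw [betaMeasure, integral_withDensity_eq_integral_toReal_smul (measurable_betaPDF a b)
    (.of_forall fun u ↦ ENNReal.ofReal_lt_top)]
  simp_rw [betaPDF, ENNReal.toReal_ofReal (betaPDFReal_nonneg ha hb _), betaPDFReal_eq_indicator,
    ← Set.indicator_smul_apply_left]
  rw [integral_indicator measurableSet_Ioo, intervalIntegral.integral_of_le zero_le_one,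
    integral_Ioc_eq_integral_Ioo, ← integral_smul]
  simp_rw [smul_smul]

lemma beta_natCast_add_one (m n : ℕ) :
    beta (m + 1) (n + 1) = (m ! * n !) / (m + n + 1)! := by
  have : (m + 1 + (n + 1) : ℝ) = ((m + n + 1 : ℕ) : ℝ) + 1 := by push_cast; ring
  rw [beta, this, Gamma_nat_eq_factorial, Gamma_nat_eq_factorial, Gamma_nat_eq_factorial]

/-- The integral which, for `1 ≤ m`, gives the reordering probability `P_{m, n+1}` up to a factor.
The case `m = 0`, not a reordering probability, starts the recursion in `m`. -/
noncomputable def reorderingIntegral (m n : ℕ) : ℝ :=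
  ∫ u in (0 : ℝ)..1, u ^ m * (1 - u) ^ n / (1 + u)

lemma integral_div_one_add_betaMeasure (m n : ℕ) :
    ∫ u, u / (1 + u) ∂betaMeasure (m + 1) (n + 1) =
      (m + n + 1)! / (m ! * n !) * reorderingIntegral (m + 1) n := by
  rw [integral_betaMeasure (by positivity) (by positivity), beta_natCast_add_one, inv_div,
    reorderingIntegral]
  congr 1
  refine intervalIntegral.integral_congr fun u _ ↦ ?_
  simp only [add_sub_cancel_right, rpow_natCast, smul_eq_mul]
  ring

lemma intervalIntegrable_reorderingIntegral (m n : ℕ) :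
    IntervalIntegrable (fun u : ℝ ↦ u ^ m * (1 - u) ^ n / (1 + u)) volume 0 1 := by
  refine ContinuousOn.intervalIntegrable_of_Icc zero_le_one ?_
  refine ContinuousOn.div (by fun_prop) (by fun_prop) fun u hu ↦ ?_
  linarith [hu.1]

lemma reorderingIntegral_zero_zero : reorderingIntegral 0 0 = log 2 := by
  simp only [reorderingIntegral, pow_zero, mul_one]
  rw [intervalIntegral.integral_comp_add_left (fun u ↦ 1 / u), integral_one_div_of_pos] <;>
    norm_num

lemma reorderingIntegral_succ_zero (m : ℕ) :
    reorderingIntegral (m + 1) 0 = 1 / (m + 1) - reorderingIntegral m 0 := by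
  have hsum : reorderingIntegral (m + 1) 0 + reorderingIntegral m 0 = 1 / (m + 1) := by
    rw [reorderingIntegral, reorderingIntegral,
      ← intervalIntegral.integral_add (intervalIntegrable_reorderingIntegral (m + 1) 0)
        (intervalIntegrable_reorderingIntegral m 0)]
    calc ∫ u in (0 : ℝ)..1, u ^ (m + 1) * (1 - u) ^ 0 / (1 + u) + u ^ m * (1 - u) ^ 0 / (1 + u)
        = ∫ u in (0 : ℝ)..1, u ^ m := by
          refine intervalIntegral.integral_congr fun u hu ↦ ?_
          rw [Set.uIcc_of_le zero_le_one] at hu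
          have : 1 + u ≠ 0 := by linarith [hu.1]
          field_simp
          ring
      _ = 1 / (m + 1) := by simp [integral_pow]
  exact eq_sub_of_add_eq hsum

lemma reorderingIntegral_succ_right (m n : ℕ) :
    reorderingIntegral m (n + 1) = reorderingIntegral m n - reorderingIntegral (m + 1) n := by
  rw [reorderingIntegral, reorderingIntegral, reorderingIntegral,
    ← intervalIntegral.integral_sub (intervalIntegrable_reorderingIntegral m n)
      (intervalIntegrable_reorderingIntegral (m + 1) n)]
  congr 1 with u
  ring

lemma reorderingIntegral_one_zero : reorderingIntegral 1 0 = 1 - log 2 := by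
  rw [reorderingIntegral_succ_zero, reorderingIntegral_zero_zero]
  norm_num

lemma reorderingIntegral_two_zero : reorderingIntegral 2 0 = log 2 - 1 / 2 := by
  rw [reorderingIntegral_succ_zero, reorderingIntegral_one_zero]
  norm_num
  ring

lemma reorderingIntegral_one_one : reorderingIntegral 1 1 = 3 / 2 - 2 * log 2 := by
  rw [reorderingIntegral_succ_right, reorderingIntegral_one_zero, reorderingIntegral_two_zero]
  ring

lemma reorderingIntegral_two_one : reorderingIntegral 2 1 = 2 * log 2 - 4 / 3 := by
  rw [reorderingIntegral_succ_right, reorderingIntegral_succ_zero 2, reorderingIntegral_two_zero]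
  norm_num
  ring

end BetaExpectation

theorem integral_div_two_mul_add_natCast_add_one {Ω : Type*} [MeasurableSpace Ω] {μ : Measure Ω}
    {X Y : Ω → ℝ} {r : ℝ} (m n : ℕ) (hr : 0 < r)
    (hX : HasLaw X (gammaMeasure (m + 1) r) μ) (hY : HasLaw Y (gammaMeasure (n + 1) r) μ)
    (hXY : IndepFun X Y μ) :
    ∫ ω, X ω / (2 * X ω + Y ω) ∂μ =
      (m + n + 1)! / (m ! * n !) * reorderingIntegral (m + 1) n := by
  rw [integral_div_two_mul_add (by positivity) (by positivity) hr hX hY hXY,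
    integral_div_one_add_betaMeasure]

/-- Reordering probabilities `P_{1,1} = 1 − ln 2`, `P_{1,2} = 3 − 4 ln 2`, `P_{2,2} = 12 ln 2 − 8`
in the standard network: values of `E[X/(2X + Y)]` for independent Gamma-distributed `X, Y`. -/
theorem reordering_probabilities
    {Ω : Type*} [MeasureSpace Ω] [IsProbabilityMeasure (ℙ : Measure Ω)]
    (c : ℝ) (hc : 0 < c)
    (X₁ Y₁ X₂ Y₂ X₃ Y₃ : Ω → ℝ)
    (hX₁ : Measurable X₁) (hY₁ : Measurable Y₁)
    (hX₂ : Measurable X₂) (hY₂ : Measurable Y₂)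
    (hX₃ : Measurable X₃) (hY₃ : Measurable Y₃)
    (h1X : Measure.map X₁ ℙ = expMeasure c) (h1Y : Measure.map Y₁ ℙ = expMeasure c)
    (h1 : IndepFun X₁ Y₁ ℙ)
    (h2X : Measure.map X₂ ℙ = expMeasure c) (h2Y : Measure.map Y₂ ℙ = gammaMeasure 2 c)
    (h2 : IndepFun X₂ Y₂ ℙ)
    (h3X : Measure.map X₃ ℙ = gammaMeasure 2 c) (h3Y : Measure.map Y₃ ℙ = gammaMeasure 2 c)
    (h3 : IndepFun X₃ Y₃ ℙ) :
    (∫ ω, X₁ ω / (2 * X₁ ω + Y₁ ω) ∂ℙ = 1 - Real.log 2) ∧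
    (∫ ω, X₂ ω / (2 * X₂ ω + Y₂ ω) ∂ℙ = 3 - 4 * Real.log 2) ∧
    (∫ ω, X₃ ω / (2 * X₃ ω + Y₃ ω) ∂ℙ = 12 * Real.log 2 - 8) := by
  have hexp : expMeasure c = gammaMeasure ((0 : ℕ) + 1) c := by
    rw [Nat.cast_zero, zero_add, expMeasure]
  have hgamma : gammaMeasure 2 c = gammaMeasure ((1 : ℕ) + 1) c := by
    rw [Nat.cast_one, one_add_one_eq_two]
  rw [hexp] at h1X h1Y h2X
  rw [hgamma] at h2Y h3X h3Y
  refine ⟨?_, ?_, ?_⟩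
  · rw [integral_div_two_mul_add_natCast_add_one 0 0 hc ⟨hX₁.aemeasurable, h1X⟩
      ⟨hY₁.aemeasurable, h1Y⟩ h1, reorderingIntegral_one_zero]
    simp
  · rw [integral_div_two_mul_add_natCast_add_one 0 1 hc ⟨hX₂.aemeasurable, h2X⟩
      ⟨hY₂.aemeasurable, h2Y⟩ h2, reorderingIntegral_one_one]
    simp only [Nat.factorial]
    norm_num
    ring
  · rw [integral_div_two_mul_add_natCast_add_one 1 1 hc ⟨hX₃.aemeasurable, h3X⟩
      ⟨hY₃.aemeasurable, h3Y⟩ h3, reorderingIntegral_two_one]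
    simp only [Nat.factorial]
    norm_num
    ring
end

section
/- Let m be a positive integer, ε ∈ (0, 1), and a, s > 0 real numbers. If a·s < (Γ(m+2)·ε)^(1/m)/m, then p_m(a·s) > 1 − ε, where p_m(s̃) = ∫₀¹ Γ_ic(m, m·s̃·x)/Γ(m) dx and Γ_ic(a, y) = ∫_y^∞ t^(a−1)·e^(−t) dt. In particular, for m = 1 (Rayleigh fading), a·s < 2·ε suffices. -/
open MeasureTheory Real

/-- The upper incomplete gamma function `Γ_ic(a, y) = ∫_y^∞ t^(a−1) e^(−t) dt`. -/
noncomputable def upperIncompleteGamma (a y : ℝ) : ℝ :=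
  ∫ t in Set.Ioi y, t ^ (a - 1) * Real.exp (-t)

/-- The probability `p_m(s̃) = ∫₀¹ Γ_ic(m, m s̃ x)/Γ(m) dx` that a randomly chosen node
in `[0, a)` can be reached, where `s̃ = a s`. -/
noncomputable def broadcastReachProb (m : ℕ) (st : ℝ) : ℝ :=
  ∫ x in Set.Ioo (0 : ℝ) 1, upperIncompleteGamma m ((m : ℝ) * st * x) / Real.Gamma m

/-!
A node at relative position `x` is missed with probability `1 - Γ_ic(m, y) / Γ(m)`, where
`y = m s̃ x`. Bounding `e^(-t) ≤ 1` in the complementary integral `∫₀^y t^(m-1) e^(-t) dt` shows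
that this is at most `y^m / Γ(m+1)`, and averaging over `x` bounds the expected missed fraction by
`(m s̃)^m / Γ(m+2)`. The hypothesis on `s̃` says exactly that this is less than `ε`.
-/

section UpperIncompleteGamma

variable {a y : ℝ}

theorem integrableOn_rpow_mul_exp_neg (ha : 0 < a) :
    IntegrableOn (fun t : ℝ ↦ t ^ (a - 1) * exp (-t)) (Set.Ioi 0) := by
  simpa only [mul_comm] using GammaIntegral_convergent ha

theorem upperIncompleteGamma_zero (ha : 0 < a) : upperIncompleteGamma a 0 = Gamma a := by
  simp only [upperIncompleteGamma, Gamma_eq_integral ha, mul_comm]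

theorem antitoneOn_upperIncompleteGamma (ha : 0 < a) :
    AntitoneOn (upperIncompleteGamma a) (Set.Ici 0) := by
  intro y hy z _ hyz
  refine setIntegral_mono_set
    ((integrableOn_rpow_mul_exp_neg ha).mono_set (Set.Ioi_subset_Ioi hy)) ?_
    (Set.Ioi_subset_Ioi hyz).eventuallyLE
  filter_upwards [ae_restrict_mem measurableSet_Ioi] with t ht
  exact mul_nonneg (rpow_nonneg (hy.trans ht.le) _) (exp_pos _).le

theorem Gamma_sub_upperIncompleteGamma (ha : 0 < a) (hy : 0 ≤ y) :
    Gamma a - upperIncompleteGamma a y = ∫ t in (0 : ℝ)..y, t ^ (a - 1) * exp (-t) := by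
  rw [← upperIncompleteGamma_zero ha]
  exact intervalIntegral.integral_Ioi_sub_Ioi (integrableOn_rpow_mul_exp_neg ha) hy

theorem integral_rpow_mul_exp_neg_le (ha : 0 < a) (hy : 0 ≤ y) :
    ∫ t in (0 : ℝ)..y, t ^ (a - 1) * exp (-t) ≤ y ^ a / a := by
  have rpow_integrable : IntervalIntegrable (fun t : ℝ ↦ t ^ (a - 1)) volume 0 y :=
    intervalIntegral.intervalIntegrable_rpow' (by linarith)
  calc ∫ t in (0 : ℝ)..y, t ^ (a - 1) * exp (-t)
      ≤ ∫ t in (0 : ℝ)..y, t ^ (a - 1) := by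
        refine intervalIntegral.integral_mono_on hy
          (rpow_integrable.mul_continuousOn (by fun_prop)) rpow_integrable fun t ht ↦ ?_
        exact mul_le_of_le_one_right (rpow_nonneg ht.1 _) (exp_le_one_iff.2 (neg_nonpos.2 ht.1))
    _ = y ^ a / a := by
        rw [integral_rpow (.inl (by linarith)), sub_add_cancel, zero_rpow ha.ne', sub_zero]

theorem one_sub_rpow_div_Gamma_le (ha : 0 < a) (hy : 0 ≤ y) :
    1 - y ^ a / Gamma (a + 1) ≤ upperIncompleteGamma a y / Gamma a := by
  have hΓ : 0 < Gamma a := Gamma_pos_of_pos ha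
  have lower_le : Gamma a - upperIncompleteGamma a y ≤ y ^ a / a :=
    (Gamma_sub_upperIncompleteGamma ha hy).trans_le (integral_rpow_mul_exp_neg_le ha hy)
  calc 1 - y ^ a / Gamma (a + 1) = (Gamma a - y ^ a / a) / Gamma a := by
        rw [Gamma_add_one ha.ne', sub_div, div_self hΓ.ne', div_div]
    _ ≤ upperIncompleteGamma a y / Gamma a := by
        gcongr
        linarith

end UpperIncompleteGamma

/-- The reachability probability `p_m(s̃)` for a real fading parameter `m`; at a natural number `m`
it is `broadcastReachProb m s̃`. -/
noncomputable def nakagamiReachProb (m st : ℝ) : ℝ :=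
  ∫ x in Set.Ioo (0 : ℝ) 1, upperIncompleteGamma m (m * st * x) / Gamma m

theorem broadcastReachProb_eq_nakagamiReachProb (m : ℕ) (st : ℝ) :
    broadcastReachProb m st = nakagamiReachProb m st :=
  rfl

section ReachProb

variable {m c st ε : ℝ}

theorem integrableOn_upperIncompleteGamma_div_Gamma (hm : 0 < m) (hc : 0 ≤ c) :
    IntegrableOn (fun x ↦ upperIncompleteGamma m (c * x) / Gamma m) (Set.Ioo 0 1) := by
  have antitone : AntitoneOn (fun x ↦ upperIncompleteGamma m (c * x)) (Set.Icc 0 1) :=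
    fun x hx z hz hxz ↦ antitoneOn_upperIncompleteGamma hm (mul_nonneg hc hx.1)
      (mul_nonneg hc hz.1) (mul_le_mul_of_nonneg_left hxz hc)
  have integrable_Icc := antitone.integrableOn_isCompact (μ := volume) isCompact_Icc
  exact (integrable_Icc.mono_set Set.Ioo_subset_Icc_self).div_const _

theorem integrableOn_mul_rpow_Ioo (hm : -1 < m) (hc : 0 ≤ c) :
    IntegrableOn (fun x ↦ (c * x) ^ m) (Set.Ioo 0 1) := by
  have scaled_integrable : IntegrableOn (fun x : ℝ ↦ c ^ m * x ^ m) (Set.Ioo 0 1) :=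
    ((intervalIntegrable_iff_integrableOn_Ioo_of_le zero_le_one).1
      (intervalIntegral.intervalIntegrable_rpow' hm)).const_mul _
  exact scaled_integrable.congr_fun (fun x hx ↦ (mul_rpow hc hx.1.le).symm) measurableSet_Ioo

theorem integral_mul_rpow_Ioo (hm : -1 < m) (hc : 0 ≤ c) :
    ∫ x in Set.Ioo (0 : ℝ) 1, (c * x) ^ m = c ^ m / (m + 1) := by
  calc ∫ x in Set.Ioo (0 : ℝ) 1, (c * x) ^ m
      = ∫ x in Set.Ioo (0 : ℝ) 1, c ^ m * x ^ m :=
        setIntegral_congr_fun measurableSet_Ioo fun x hx ↦ mul_rpow hc hx.1.le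
    _ = c ^ m * ∫ x in (0 : ℝ)..1, x ^ m := by
        rw [integral_const_mul, ← integral_Ioc_eq_integral_Ioo,
          ← intervalIntegral.integral_of_le zero_le_one]
    _ = c ^ m / (m + 1) := by
        rw [integral_rpow (.inl hm), one_rpow, zero_rpow (by linarith), sub_zero, mul_one_div]

theorem integrableOn_one_sub_rpow_div_Gamma (hm : -1 < m) (hc : 0 ≤ c) :
    IntegrableOn (fun x ↦ 1 - (c * x) ^ m / Gamma (m + 1)) (Set.Ioo 0 1) :=
  (integrableOn_const measure_Ioo_lt_top.ne).sub ((integrableOn_mul_rpow_Ioo hm hc).div_const _)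

theorem integral_one_sub_rpow_div_Gamma (hm : -1 < m) (hc : 0 ≤ c) :
    ∫ x in Set.Ioo (0 : ℝ) 1, (1 - (c * x) ^ m / Gamma (m + 1)) = 1 - c ^ m / Gamma (m + 2) := by
  have Gamma_add_two : Gamma (m + 2) = (m + 1) * Gamma (m + 1) := by
    rw [← Gamma_add_one (by linarith), add_assoc, one_add_one_eq_two]
  have integral_one : ∫ _ in Set.Ioo (0 : ℝ) 1, (1 : ℝ) = 1 := by
    simp
  rw [integral_sub (integrable_const 1) ((integrableOn_mul_rpow_Ioo hm hc).div_const _),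
    integral_div, integral_mul_rpow_Ioo hm hc, integral_one, div_div, Gamma_add_two]

theorem one_sub_rpow_div_Gamma_le_nakagamiReachProb (hm : 0 < m) (hst : 0 ≤ st) :
    1 - (m * st) ^ m / Gamma (m + 2) ≤ nakagamiReachProb m st := by
  have hc : 0 ≤ m * st := mul_nonneg hm.le hst
  have neg_one_lt : -1 < m := by linarith
  rw [← integral_one_sub_rpow_div_Gamma neg_one_lt hc]
  exact setIntegral_mono_on (integrableOn_one_sub_rpow_div_Gamma neg_one_lt hc)
    (integrableOn_upperIncompleteGamma_div_Gamma hm hc) measurableSet_Ioo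
    fun x hx ↦ one_sub_rpow_div_Gamma_le hm (mul_nonneg hc hx.1.le)

theorem epsilon_reachability_general (hm : 0 < m) (hε : 0 ≤ ε) (hst : 0 ≤ st)
    (h : st < (Gamma (m + 2) * ε) ^ (1 / m) / m) : 1 - ε < nakagamiReachProb m st := by
  have hΓ : 0 < Gamma (m + 2) := Gamma_pos_of_pos (by linarith)
  have rpow_lt : (m * st) ^ m < Gamma (m + 2) * ε := by
    rwa [lt_div_iff₀' hm, one_div,
      lt_rpow_inv_iff_of_pos (mul_nonneg hm.le hst) (mul_nonneg hΓ.le hε) hm] at h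
  have missed_lt : (m * st) ^ m / Gamma (m + 2) < ε := (div_lt_iff₀' hΓ).2 rpow_lt
  linarith [one_sub_rpow_div_Gamma_le_nakagamiReachProb hm hst]

theorem rayleigh_threshold : (Gamma (1 + 2) * ε) ^ (1 / (1 : ℝ)) / 1 = 2 * ε := by
  have Gamma_three : Gamma (1 + 2) = 2 := by
    rw [show (1 + 2 : ℝ) = 3 by norm_num, Gamma_ofNat_eq_factorial 2, Nat.factorial_two,
      Nat.cast_two]
  rw [Gamma_three, div_one, div_one, rpow_one]

end ReachProb

/-- ε-reachability: if `a s < (Γ(m+2) ε)^(1/m)/m` then `p_m(a s) > 1 − ε`;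
in particular, for `m = 1` (Rayleigh fading) the condition `a s < 2 ε` suffices. -/
theorem epsilon_reachability (m : ℕ) (hm : 0 < m) (ε a s : ℝ)
    (hε : ε ∈ Set.Ioo (0 : ℝ) 1) (ha : 0 < a) (hs : 0 < s) :
    (a * s < (Real.Gamma ((m : ℝ) + 2) * ε) ^ (1 / (m : ℝ)) / m →
      broadcastReachProb m (a * s) > 1 - ε) ∧
    (m = 1 → a * s < 2 * ε → broadcastReachProb m (a * s) > 1 - ε) := by
  have reachable := epsilon_reachability_general (Nat.cast_pos.2 hm) hε.1.le (mul_pos ha hs).le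
  rw [broadcastReachProb_eq_nakagamiReachProb]
  refine ⟨reachable, ?_⟩
  rintro rfl h
  exact reachable (by rwa [Nat.cast_one, rayleigh_threshold])
end

section
/- Let m be a positive integer and let p_m(s̃) = ∫₀¹ Γ_ic(m, m·s̃·x)/Γ(m) dx for s̃ > 0, with Γ_ic(a, y) = ∫_y^∞ t^(a−1)·e^(−t) dt. Then, as s̃ → 0 from the right, p_m(s̃) − (1 − (m^m/Γ(m+2))·s̃^m) = O(s̃^(m+1)); that is, p_m(s̃) = 1 − (m^m/Γ(m+2))·s̃^m + O(s̃^(m+1)). -/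
open MeasureTheory Real Filter Asymptotics

/-! Integrating `0 ≤ 1 - exp (-t) ≤ t` against `t ^ (a - 1)` over `[0, y]` bounds
`Γ(a, y) - (Γ(a) - y ^ a / a)` by `y ^ (a + 1) / (a + 1)`. Averaging over `y = c x` with
`x ∈ [0, 1]` divides `y ^ a` by `a + 1`, and `a (a + 1) Γ(a) = Γ(a + 2)` turns the leading term
into the stated coefficient. -/

section IncompleteGamma

variable {a y c r : ℝ}

lemma Gamma_add_two (ha : a ≠ 0) (ha' : a + 1 ≠ 0) :
    Gamma (a + 2) = a * (a + 1) * Gamma a := by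
  rw [← one_add_one_eq_two, ← add_assoc, Gamma_add_one ha', Gamma_add_one ha]
  ring

lemma integral_rpow_zero_left (hr : -1 < r) (y : ℝ) :
    ∫ t in 0..y, t ^ r = y ^ (r + 1) / (r + 1) := by
  rw [integral_rpow (.inl hr), zero_rpow (by linarith), sub_zero]

lemma integral_mul_rpow_zero_one (hr : -1 < r) (hc : 0 ≤ c) :
    ∫ x in (0 : ℝ)..1, (c * x) ^ r = c ^ r / (r + 1) := by
  have h_mul : ∫ x in (0 : ℝ)..1, (c * x) ^ r = ∫ x in (0 : ℝ)..1, c ^ r * x ^ r := by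
    refine intervalIntegral.integral_congr fun x hx ↦ mul_rpow hc ?_
    rw [Set.uIcc_of_le zero_le_one] at hx
    exact hx.1
  rw [h_mul, intervalIntegral.integral_const_mul, integral_rpow_zero_left hr, one_rpow, mul_one_div]

lemma intervalIntegrable_rpow_mul_exp_neg (ha : 0 < a) (u v : ℝ) :
    IntervalIntegrable (fun t ↦ t ^ (a - 1) * exp (-t)) volume u v :=
  (intervalIntegral.intervalIntegrable_rpow' (by linarith)).mul_continuousOn (by fun_prop)

lemma upperIncompleteGamma_eq_Gamma_sub_integral (ha : 0 < a) (hy : 0 ≤ y) :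
    upperIncompleteGamma a y = Gamma a - ∫ t in 0..y, t ^ (a - 1) * exp (-t) := by
  have h_int : IntegrableOn (fun t ↦ t ^ (a - 1) * exp (-t)) (Set.Ioi 0) := by
    simpa only [mul_comm] using GammaIntegral_convergent ha
  have h_Gamma : Gamma a = ∫ t in Set.Ioi 0, t ^ (a - 1) * exp (-t) := by
    simpa only [mul_comm] using Gamma_eq_integral ha
  rw [h_Gamma, ← intervalIntegral.integral_Ioi_sub_Ioi h_int hy, sub_sub_cancel,
    upperIncompleteGamma]

lemma continuousOn_upperIncompleteGamma (ha : 0 < a) :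
    ContinuousOn (upperIncompleteGamma a) (Set.Ici 0) :=
  (continuous_const.sub (intervalIntegral.continuous_primitive
    (intervalIntegrable_rpow_mul_exp_neg ha) 0)).continuousOn.congr
      fun _ hy ↦ upperIncompleteGamma_eq_Gamma_sub_integral ha hy

lemma abs_rpow_sub_rpow_mul_exp_neg_le (a : ℝ) {t : ℝ} (ht : 0 < t) :
    |t ^ (a - 1) - t ^ (a - 1) * exp (-t)| ≤ t ^ a := by
  have h_exp : |1 - exp (-t)| ≤ t := by
    rw [abs_of_nonneg (by simpa using ht.le)]
    linarith [one_sub_le_exp_neg t]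
  calc |t ^ (a - 1) - t ^ (a - 1) * exp (-t)| = t ^ (a - 1) * |1 - exp (-t)| := by
        rw [← mul_one_sub, abs_mul, abs_of_pos (rpow_pos_of_pos ht _)]
    _ ≤ t ^ (a - 1) * t := by gcongr
    _ = t ^ a := by rw [← rpow_add_one ht.ne', sub_add_cancel]

lemma abs_upperIncompleteGamma_sub_le (ha : 0 < a) (hy : 0 ≤ y) :
    |upperIncompleteGamma a y - (Gamma a - y ^ a / a)| ≤ y ^ (a + 1) / (a + 1) := by
  have h_lead : y ^ a / a = ∫ t in 0..y, t ^ (a - 1) := by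
    rw [integral_rpow_zero_left (by linarith), sub_add_cancel]
  have h_diff : upperIncompleteGamma a y - (Gamma a - y ^ a / a) =
      ∫ t in 0..y, (t ^ (a - 1) - t ^ (a - 1) * exp (-t)) := by
    rw [upperIncompleteGamma_eq_Gamma_sub_integral ha hy, h_lead, intervalIntegral.integral_sub
      (intervalIntegral.intervalIntegrable_rpow' (by linarith))
      (intervalIntegrable_rpow_mul_exp_neg ha 0 y)]
    ring
  rw [h_diff, ← integral_rpow_zero_left (by linarith : -1 < a), ← norm_eq_abs]
  exact intervalIntegral.norm_integral_le_of_norm_le hy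
    (.of_forall fun t ht ↦ abs_rpow_sub_rpow_mul_exp_neg_le a ht.1)
    (intervalIntegral.intervalIntegrable_rpow' (by linarith))

lemma abs_integral_upperIncompleteGamma_sub_le (ha : 0 < a) (hc : 0 ≤ c) :
    |(∫ x in (0 : ℝ)..1, upperIncompleteGamma a (c * x)) - (Gamma a - c ^ a / (a * (a + 1)))| ≤
      c ^ (a + 1) / ((a + 1) * (a + 2)) := by
  have h_rpow {q : ℝ} (hq : 0 ≤ q) : Continuous fun x : ℝ ↦ (c * x) ^ q :=
    (continuous_const_mul c).rpow_const fun _ ↦ .inr hq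
  have h_upper : IntervalIntegrable (fun x ↦ upperIncompleteGamma a (c * x)) volume 0 1 := by
    refine ContinuousOn.intervalIntegrable_of_Icc zero_le_one ?_
    exact (continuousOn_upperIncompleteGamma ha).comp (by fun_prop)
      fun x hx ↦ mul_nonneg hc hx.1
  have h_lead : IntervalIntegrable (fun x : ℝ ↦ (c * x) ^ a / a) volume 0 1 :=
    ((h_rpow ha.le).div_const a).intervalIntegrable 0 1
  have h_main : Gamma a - c ^ a / (a * (a + 1)) =
      ∫ x in (0 : ℝ)..1, (Gamma a - (c * x) ^ a / a) := by
    rw [intervalIntegral.integral_sub intervalIntegrable_const h_lead,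
      intervalIntegral.integral_div, integral_mul_rpow_zero_one (by linarith) hc,
      intervalIntegral.integral_const, sub_zero, one_smul, div_div, mul_comm a]
  have h_error : c ^ (a + 1) / ((a + 1) * (a + 2)) =
      ∫ x in (0 : ℝ)..1, (c * x) ^ (a + 1) / (a + 1) := by
    rw [intervalIntegral.integral_div, integral_mul_rpow_zero_one (by linarith) hc, div_div]
    ring
  rw [h_main, h_error, ← intervalIntegral.integral_sub h_upper
    (intervalIntegrable_const.sub h_lead), ← norm_eq_abs]
  exact intervalIntegral.norm_integral_le_of_norm_le zero_le_one
    (.of_forall fun x hx ↦ abs_upperIncompleteGamma_sub_le ha (mul_nonneg hc hx.1.le))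
    (((h_rpow (by positivity)).div_const _).intervalIntegrable 0 1)

end IncompleteGamma

theorem broadcast_reach_prob_taylor_general {a : ℝ} (ha : 0 < a) :
    (fun s : ℝ ↦ (∫ x in Set.Ioo (0 : ℝ) 1, upperIncompleteGamma a (a * s * x) / Gamma a)
        - (1 - a ^ a / Gamma (a + 2) * s ^ a))
      =O[nhdsWithin 0 (Set.Ioi 0)] fun s : ℝ ↦ s ^ (a + 1) := by
  refine .of_bound (a ^ (a + 1) / ((a + 1) * (a + 2)) / Gamma a) ?_
  filter_upwards [self_mem_nhdsWithin] with s (hs : 0 < s)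
  have h_Gamma : 0 < Gamma a := Gamma_pos_of_pos ha
  have h_normalize : (∫ x in Set.Ioo (0 : ℝ) 1, upperIncompleteGamma a (a * s * x) / Gamma a)
        - (1 - a ^ a / Gamma (a + 2) * s ^ a) =
      ((∫ x in (0 : ℝ)..1, upperIncompleteGamma a (a * s * x))
        - (Gamma a - (a * s) ^ a / (a * (a + 1)))) / Gamma a := by
    rw [integral_div, ← integral_Ioc_eq_integral_Ioo,
      ← intervalIntegral.integral_of_le zero_le_one, Gamma_add_two ha.ne' (by positivity),
      mul_rpow ha.le hs.le]
    field_simp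
  rw [h_normalize, norm_div, norm_of_nonneg h_Gamma.le, norm_of_nonneg (rpow_nonneg hs.le _),
    div_mul_eq_mul_div, div_mul_eq_mul_div, ← mul_rpow ha.le hs.le]
  gcongr
  exact abs_integral_upperIncompleteGamma_sub_le ha (by positivity)

/-- Taylor expansion of the broadcast reachability probability at `s̃ = 0`:
`p_m(s̃) = 1 − (m^m/Γ(m+2)) s̃^m + O(s̃^(m+1))` as `s̃ → 0⁺`. -/
theorem broadcast_reach_prob_taylor (m : ℕ) (hm : 0 < m) :
    (fun st : ℝ => broadcastReachProb m st
        - (1 - (m : ℝ) ^ m / Real.Gamma ((m : ℝ) + 2) * st ^ m))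
      =O[nhdsWithin 0 (Set.Ioi 0)] fun st : ℝ => st ^ (m + 1) := by
  simpa only [broadcastReachProb, ← rpow_natCast, Nat.cast_add_one] using
    broadcast_reach_prob_taylor_general (Nat.cast_pos.mpr hm)
end
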